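/- Let R be a commutative Noetherian ring, S a Serre subcategory of the category of R-modules, 𝔟 ⊆ 𝔞 ideals of R, M an R-module, and s ≥ 0 an integer. If Ext^{j}_R(R/𝔞, H^{i}_𝔟(M)) belongs to S for all integers i, j ≥ 0 with i + j ≤ s, then Ext^{n}_R(R/𝔞, M) belongs to S for all integers 0 ≤ n ≤ s. -/

import Mathlib

open CategoryTheory

universe u

/-- The `R`-module `Ext^i_R(N, M)` for two `R`-modules (objects of `ModuleCat R`). -/
noncomputable def extObj {R : Type u} [CommRing R] (N M : ModuleCat.{u} R) (i : ℕ) :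
    ModuleCat.{u} R :=
  ((Ext R (ModuleCat.{u} R) i).obj (Opposite.op N)).obj M

/-- The `R`-module `Ext^i_R(R/𝔞, M)`. -/
noncomputable def extIdeal {R : Type u} [CommRing R] (𝔞 : Ideal R) (i : ℕ)
    (M : ModuleCat.{u} R) : ModuleCat.{u} R :=
  extObj (ModuleCat.of R (R ⧸ 𝔞)) M i

/-- A Serre subcategory of the category of `R`-modules: a class of `R`-modules such that
for every short exact sequence `0 → L → M → N → 0`, `M` belongs to the class if and only if
both `L` and `N` belong to it. -/
structure SerreClass (R : Type u) [CommRing R] : Type (u + 1) where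
  mem : ∀ (M : Type u) [AddCommGroup M] [Module R M], Prop
  mem_iff_of_ses :
    ∀ {L M N : Type u} [AddCommGroup L] [Module R L] [AddCommGroup M] [Module R M]
      [AddCommGroup N] [Module R N] (f : L →ₗ[R] M) (g : M →ₗ[R] N),
      Function.Injective f → Function.Surjective g → LinearMap.range f = LinearMap.ker g →
      (mem M ↔ (mem L ∧ mem N))

open Limits

/-- A left homology data constructed from exact sequences. -/
noncomputable def CategoryTheory.ShortComplex.LeftHomologyData.ofExact {C : Type*} [Category* C]
    [Abelian C] {S : ShortComplex C} {K H : C} (i : K ⟶ S.X₂) (π : K ⟶ H) (k : S.X₁ ⟶ K)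
    (fac : k ≫ i = S.f) (hi₀ : Mono i) (hπ₀ : Epi π) (wi : i ≫ S.g = 0) (wπ : k ≫ π = 0)
    (hi : (ShortComplex.mk i S.g wi).Exact) (hπ : (ShortComplex.mk k π wπ).Exact) :
    S.LeftHomologyData :=
  have : Mono (ShortComplex.mk i S.g wi).f := hi₀
  have : Epi (ShortComplex.mk k π wπ).g := hπ₀
  let hi' : IsLimit (KernelFork.ofι i wi) := hi.fIsKernel
  have hk : k = hi'.lift (KernelFork.ofι S.f S.zero) := by
    rw [← cancel_mono i, fac]
    exact (hi'.fac (KernelFork.ofι S.f S.zero) WalkingParallelPair.zero).symm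
  { K := K
    H := H
    i := i
    π := π
    wi := wi
    hi := hi'
    wπ := hk ▸ wπ
    hπ := CokernelCofork.isColimitOfIsColimitOfIff' hπ.gIsCokernel _ (fun _ _ ↦ by subst hk; rfl) }

lemma CategoryTheory.ShortComplex.LeftHomologyData.f'_comp_eq_of_comp_i_eq {C : Type*}
    [Category* C] [HasZeroMorphisms C] {S₁ S₂ : ShortComplex C} {h₁ : S₁.LeftHomologyData}
    {h₂ : S₂.LeftHomologyData} (φ : S₁ ⟶ S₂) (φK : h₁.K ⟶ h₂.K)
    (commi : φK ≫ h₂.i = h₁.i ≫ φ.τ₂) : h₁.f' ≫ φK = φ.τ₁ ≫ h₂.f' := by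
  rw [← cancel_mono h₂.i, Category.assoc, Category.assoc, commi, h₂.f'_i, φ.comm₁₂,
    h₁.f'_i_assoc]

namespace CategoryTheory.ProjectiveResolution

variable {R : Type u} [CommRing R] {X : ModuleCat.{u} R} (P : ProjectiveResolution X)

lemma smul_extMk {Y : ModuleCat.{u} R} {n : ℕ} (r : R) (f : P.complex.X n ⟶ Y) (m : ℕ)
    (hm : n + 1 = m) (hf : P.complex.d m n ≫ f = 0) :
    r • P.extMk f m hm hf = P.extMk (r • f) m hm (by simp [hf]) := by
  rw [Abelian.Ext.smul_eq_comp_mk₀, extMk_comp_mk₀]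
  simp

lemma extMk_zero_eq_zero_iff {Y : ModuleCat.{u} R} (f : P.complex.X 0 ⟶ Y) (m : ℕ)
    (hm : 0 + 1 = m) (hf : P.complex.d m 0 ≫ f = 0) :
    P.extMk f m hm hf = 0 ↔ f = 0 := by
  refine ⟨fun h ↦ ?_, ?_⟩
  · simp only [← P.extEquivCohomologyClass.apply_eq_iff_eq,
      extEquivCohomologyClass_extMk, extEquivCohomologyClass_zero,
      CochainComplex.HomComplex.CohomologyClass.mk_eq_zero_iff] at h
    rw [CochainComplex.HomComplex.Cocycle.toSingleMk_mem_coboundaries_iff _ _ _ _ _ 1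
      (by lia)] at h
    obtain ⟨g, hg⟩ := h
    have : g = 0 := (P.cochainComplex.isZero_of_isStrictlyLE 0 1 (by lia)).eq_of_src _ _
    rw [this, comp_zero, eq_comm] at hg
    rwa [← cancel_epi (P.cochainComplexXIso (-(0 : ℕ)) 0 rfl).hom, comp_zero]
  · rintro rfl
    simp

variable (Y : ModuleCat.{u} R) (n : ℕ)

/-- The submodule of `n`-cocycles with values in `Y`. -/
noncomputable def extCocycles : Submodule R (P.complex.X n ⟶ Y) :=
  LinearMap.ker (Linear.leftComp R Y (P.complex.d ((ComplexShape.up ℕ).next n) n))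

variable {Y n} in
lemma mem_extCocycles_iff (f : P.complex.X n ⟶ Y) :
    f ∈ P.extCocycles Y n ↔ P.complex.d ((ComplexShape.up ℕ).next n) n ≫ f = 0 :=
  Iff.rfl

/-- The linear map sending a cocycle to its class. -/
noncomputable def extMkLinearMap : P.extCocycles Y n →ₗ[R] Abelian.Ext X Y n where
  toFun f := P.extMk f.1 ((ComplexShape.up ℕ).next n) (CochainComplex.next ℕ n).symm
    ((P.mem_extCocycles_iff _).1 f.2)
  map_add' _ _ := (P.add_extMk _ _ _ _ _ _).symm
  map_smul' _ _ := (P.smul_extMk _ _ _ _ _).symm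

lemma extMkLinearMap_surjective : Function.Surjective (P.extMkLinearMap Y n) := by
  intro α
  obtain ⟨f, hf, rfl⟩ := P.extMk_surjective α ((ComplexShape.up ℕ).next n)
    (CochainComplex.next ℕ n).symm
  exact ⟨⟨f, hf⟩, rfl⟩

lemma extMkLinearMap_eq_zero_iff (f : P.extCocycles Y n) :
    P.extMkLinearMap Y n f = 0 ↔
      ∃ g : P.complex.X ((ComplexShape.up ℕ).prev n) ⟶ Y, P.complex.d n _ ≫ g = f.1 := by
  obtain _ | n := n
  · rw [CochainComplex.prev_nat_zero]
    refine (P.extMk_zero_eq_zero_iff f.1 _ (CochainComplex.next ℕ 0).symm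
      ((P.mem_extCocycles_iff _).1 f.2)).trans ?_
    simp [eq_comm]
  · rw [CochainComplex.prev_nat_succ]
    exact P.extMk_eq_zero_iff f.1 _ (CochainComplex.next ℕ (n + 1)).symm
      ((P.mem_extCocycles_iff _).1 f.2) n rfl

lemma extLeftHomologyData_exact_i :
    (ShortComplex.mk (ModuleCat.ofHom (P.extCocycles Y n).subtype)
      ((P.complex.linearYonedaObj R Y).sc n).g (by ext f; exact f.2)).Exact := by
  rw [ShortComplex.moduleCat_exact_iff]
  intro f hf
  exact ⟨⟨f, hf⟩, rfl⟩

lemma extLeftHomologyData_exact_π :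
    (ShortComplex.mk (X₁ := ((P.complex.linearYonedaObj R Y).sc n).X₁)
      (ModuleCat.ofHom (((P.complex.linearYonedaObj R Y).sc n).f.hom.codRestrict
        (P.extCocycles Y n) (fun g ↦
          congr($(((P.complex.linearYonedaObj R Y).sc n).zero) g))))
      (ModuleCat.ofHom (P.extMkLinearMap Y n)) (by
        ext g
        exact (P.extMkLinearMap_eq_zero_iff Y n _).2 ⟨g, rfl⟩)).Exact := by
  rw [ShortComplex.moduleCat_exact_iff]
  intro f hf
  obtain ⟨g, hg⟩ := (P.extMkLinearMap_eq_zero_iff Y n f).1 hf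
  exact ⟨g, Subtype.ext hg⟩

/-- The left homology data computing `Ext X Y n` from a projective resolution of `X`. -/
noncomputable def extLeftHomologyData :
    ((P.complex.linearYonedaObj R Y).sc n).LeftHomologyData :=
  .ofExact (S := (P.complex.linearYonedaObj R Y).sc n)
    (ModuleCat.ofHom (P.extCocycles Y n).subtype) (ModuleCat.ofHom (P.extMkLinearMap Y n)) _ rfl
    ((ModuleCat.mono_iff_injective _).2 Subtype.val_injective)
    ((ModuleCat.epi_iff_surjective _).2 (P.extMkLinearMap_surjective Y n))
    _ _ (P.extLeftHomologyData_exact_i Y n) (P.extLeftHomologyData_exact_π Y n)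

/-- The isomorphism between the two definitions of `Ext`. -/
noncomputable def extIso : ((Ext R (ModuleCat.{u} R) n).obj (Opposite.op X)).obj Y ≅
    ModuleCat.of R (Abelian.Ext X Y n) :=
  P.isoExt n Y ≪≫ (P.extLeftHomologyData Y n).homologyIso

/-- The map of cochain complexes induced by a morphism of projective resolutions. -/
noncomputable def linearYonedaObjMap {X' : ModuleCat.{u} R} {P' : ProjectiveResolution X'}
    {g : X' ⟶ X} (φ : Hom P' P g) :
    P.complex.linearYonedaObj R Y ⟶ P'.complex.linearYonedaObj R Y :=
  (HomologicalComplex.unopFunctor _ _).map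
    ((((linearYoneda R (ModuleCat.{u} R)).obj Y).rightOp.mapHomologicalComplex _).map φ.hom).op

/-- The map on cocycles induced by a morphism of projective resolutions. -/
noncomputable def extCocyclesMap {X' : ModuleCat.{u} R} {P' : ProjectiveResolution X'}
    {g : X' ⟶ X} (φ : Hom P' P g) : P.extCocycles Y n →ₗ[R] P'.extCocycles Y n :=
  LinearMap.restrict (Linear.leftComp R Y (φ.hom.f n)) (fun f hf ↦ by
    rw [mem_extCocycles_iff] at hf ⊢
    rw [Linear.leftComp_apply, ← Category.assoc, ← φ.hom.comm, Category.assoc, hf, comp_zero])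

lemma extMkLinearMap_extCocyclesMap {X' : ModuleCat.{u} R} {P' : ProjectiveResolution X'}
    {g : X' ⟶ X} (φ : Hom P' P g) :
    ModuleCat.ofHom (P.extMkLinearMap Y n) ≫
      ModuleCat.ofHom (Abelian.Ext.precompOfLinear (Abelian.Ext.mk₀ g) R Y (zero_add n)) =
    ModuleCat.ofHom (P.extCocyclesMap Y n φ) ≫ ModuleCat.ofHom (P'.extMkLinearMap Y n) := by
  ext f
  exact P.mk₀_comp_extMk f.1 _ (CochainComplex.next ℕ n).symm ((P.mem_extCocycles_iff _).1 f.2) φ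

lemma homologyMap_linearYonedaObjMap {X' : ModuleCat.{u} R} {P' : ProjectiveResolution X'}
    {g : X' ⟶ X} (φ : Hom P' P g) :
    HomologicalComplex.homologyMap (P.linearYonedaObjMap Y φ) n ≫
      (P'.extLeftHomologyData Y n).homologyIso.hom =
    (P.extLeftHomologyData Y n).homologyIso.hom ≫
      ModuleCat.ofHom (Abelian.Ext.precompOfLinear (Abelian.Ext.mk₀ g) R Y (zero_add n)) :=
  ShortComplex.LeftHomologyMapData.homologyMap_comm (h₁ := P.extLeftHomologyData Y n)
    (h₂ := P'.extLeftHomologyData Y n) (φ := (HomologicalComplex.shortComplexFunctor _ _ n).map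
      (P.linearYonedaObjMap Y φ))
    { φK := ModuleCat.ofHom (P.extCocyclesMap Y n φ)
      φH := ModuleCat.ofHom (Abelian.Ext.precompOfLinear (Abelian.Ext.mk₀ g) R Y (zero_add n))
      commi := rfl
      commf' := ShortComplex.LeftHomologyData.f'_comp_eq_of_comp_i_eq
        (h₁ := P.extLeftHomologyData Y n) (h₂ := P'.extLeftHomologyData Y n)
        ((HomologicalComplex.shortComplexFunctor _ _ n).map (P.linearYonedaObjMap Y φ)) _ rfl
      commπ := P.extMkLinearMap_extCocyclesMap Y n φ }

lemma isoExt_hom_commSq {X' : ModuleCat.{u} R} {P' : ProjectiveResolution X'}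
    {g : X' ⟶ X} (φ : Hom P' P g) :
    CommSq (P.isoExt n Y).hom (((Ext R (ModuleCat.{u} R) n).map g.op).app Y)
      (HomologicalComplex.homologyMap (P.linearYonedaObjMap Y φ) n) (P'.isoExt n Y).hom := by
  let F := ((linearYoneda R (ModuleCat.{u} R)).obj Y).rightOp
  let Φ := (F.mapHomologicalComplex _).map φ.hom
  have h₁ : CommSq (P.isoLeftDerivedObj F n).inv.unop ((F.leftDerived n).map g).unop
      (HomologicalComplex.homologyMap Φ n).unop (P'.isoLeftDerivedObj F n).inv.unop :=
    ⟨congrArg Quiver.Hom.unop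
      (P'.isoLeftDerivedObj_inv_naturality g P φ.hom φ.hom_f_zero_comp_π_f_zero F n).symm⟩
  have h₂ : CommSq (((F.mapHomologicalComplex _).obj P.complex).homologyUnop n).hom
      (HomologicalComplex.homologyMap (P.linearYonedaObjMap Y φ) n)
      (HomologicalComplex.homologyMap Φ n).unop
      (((F.mapHomologicalComplex _).obj P'.complex).homologyUnop n).hom :=
    ⟨congrArg Quiver.Hom.unop
      (HomologicalComplex.homologyOp_hom_naturality (P.linearYonedaObjMap Y φ) n)⟩
  exact h₁.horiz_comp h₂.horiz_inv

lemma extIso_hom_commSq {X' : ModuleCat.{u} R} {P' : ProjectiveResolution X'}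
    {g : X' ⟶ X} (φ : Hom P' P g) :
    CommSq (P.extIso Y n).hom (((Ext R (ModuleCat.{u} R) n).map g.op).app Y)
      (ModuleCat.ofHom (Abelian.Ext.precompOfLinear (Abelian.Ext.mk₀ g) R Y (zero_add n)))
      (P'.extIso Y n).hom :=
  (P.isoExt_hom_commSq Y n φ).horiz_comp ⟨(P.homologyMap_linearYonedaObjMap Y n φ).symm⟩

end CategoryTheory.ProjectiveResolution

section AbelianExt

variable {R : Type u} [CommRing R]

/-- The functor `X ↦ Ext X Y n`. -/
noncomputable def abelianExtFunctor (Y : ModuleCat.{u} R) (n : ℕ) :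
    (ModuleCat.{u} R)ᵒᵖ ⥤ ModuleCat.{u} R where
  obj X := ModuleCat.of R (Abelian.Ext X.unop Y n)
  map g := ModuleCat.ofHom (Abelian.Ext.precompOfLinear (Abelian.Ext.mk₀ g.unop) R Y (zero_add n))
  map_id X := by
    ext x
    exact x.mk₀_id_comp
  map_comp f g := by
    ext x
    exact (Abelian.Ext.mk₀_comp_mk₀_assoc _ _ x).symm

/-- The isomorphism between the two definitions of `Ext`, as functors in the first variable. -/
noncomputable def extFlipObjIso (Y : ModuleCat.{u} R) (n : ℕ) :
    (Ext R (ModuleCat.{u} R) n).flip.obj Y ≅ abelianExtFunctor Y n :=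
  NatIso.ofComponents (fun X ↦ (projectiveResolution X.unop).extIso Y n) (fun g ↦
    ((projectiveResolution _).extIso_hom_commSq Y n
      { hom := ProjectiveResolution.lift g.unop _ _
        hom_f_zero_comp_π_f_zero := ProjectiveResolution.lift_commutes_zero _ _ _ }).w.symm)

/-- The inductive system of the modules `Ext (R ⧸ 𝔟 ^ t) Y n`. -/
noncomputable def extPowersDiagram (𝔟 : Ideal R) (n : ℕ) (Y : ModuleCat.{u} R) :
    ℕᵒᵖᵒᵖ ⥤ ModuleCat.{u} R :=
  (localCohomology.ringModIdeals (localCohomology.idealPowersDiagram 𝔟)).op ⋙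
    abelianExtFunctor Y n

/-- Local cohomology is the colimit of the modules `Ext (R ⧸ 𝔟 ^ t) Y n`. -/
noncomputable def localCohomologyObjIso (𝔟 : Ideal R) (n : ℕ) (Y : ModuleCat.{u} R) :
    (localCohomology 𝔟 n).obj Y ≅ colimit (extPowersDiagram 𝔟 n Y) :=
  colimitObjIsoColimitCompEvaluation _ Y ≪≫ HasColimit.isoOfNatIso
    (Functor.isoWhiskerLeft
      (localCohomology.ringModIdeals (localCohomology.idealPowersDiagram 𝔟)).op
      (extFlipObjIso Y n))

end AbelianExt

section FilteredColimit

variable {R : Type u} [CommRing R] {J : Type} [SmallCategory J] [IsFiltered J]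

/-- A diagram of modules is eventually zero if every element is annihilated by a transition map. -/
def EventuallyZero (F : J ⥤ ModuleCat.{u} R) : Prop :=
  ∀ (j : J) (x : F.obj j), ∃ (j' : J) (f : j ⟶ j'), F.map f x = 0

instance (F : J ⥤ ModuleCat.{u} R) : PreservesColimit F (forget (ModuleCat.{u} R)) :=
  have := preservesFilteredColimitsOfSize_shrink.{0, u, 0, u} (forget (ModuleCat.{u} R))
  have := PreservesFilteredColimitsOfSize.preserves_filtered_colimits
    (F := forget (ModuleCat.{u} R)) J
  inferInstance

lemma exists_map_eq_zero_of_colimit_ι_eq_zero (F : J ⥤ ModuleCat.{u} R) (j : J) (x : F.obj j)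
    (hx : colimit.ι F j x = 0) : ∃ (j' : J) (f : j ⟶ j'), F.map f x = 0 :=
  Concrete.colimit_rep_eq_zero.{u, 0, 0, u} R F j x hx

lemma isIso_colimMap_of_eventually {F G : J ⥤ ModuleCat.{u} R} (α : F ⟶ G)
    (hinj : ∀ (j : J) (x : F.obj j), α.app j x = 0 → ∃ (j' : J) (f : j ⟶ j'), F.map f x = 0)
    (hsurj : ∀ (j : J) (y : G.obj j), ∃ (j' : J) (f : j ⟶ j') (x : F.obj j'),
      α.app j' x = G.map f y) : IsIso (colimMap α) := by
  have hα (j : J) (x : F.obj j) : colimMap α (colimit.ι F j x) = colimit.ι G j (α.app j x) :=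
    congr($(ι_colimMap α j) x)
  rw [ConcreteCategory.isIso_iff_bijective]
  refine ⟨(injective_iff_map_eq_zero (colimMap α).hom).2 fun x hx ↦ ?_, fun y ↦ ?_⟩
  · obtain ⟨j, x, rfl⟩ := Concrete.colimit_exists_rep F x
    obtain ⟨j', f, hf⟩ := exists_map_eq_zero_of_colimit_ι_eq_zero G j _ ((hα j x).symm.trans hx)
    obtain ⟨j'', f', hf'⟩ := hinj j' (F.map f x)
      ((congr($(α.naturality f) x)).trans hf)
    rw [← congr($(colimit.w F (f ≫ f')) x), F.map_comp]
    exact (congrArg (colimit.ι F j'') hf').trans (map_zero _)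
  · obtain ⟨j, y, rfl⟩ := Concrete.colimit_exists_rep G y
    obtain ⟨j', f, x, hx⟩ := hsurj j y
    refine ⟨colimit.ι F j' x, ?_⟩
    rw [hα, hx]
    exact congr($(colimit.w G f) y)

end FilteredColimit

section

variable {R : Type u} [CommRing R] (𝔟 : Ideal R)

/-- The map of inductive systems induced by the composition with an extension class. -/
noncomputable def extPowersDiagramMap {Y Z : ModuleCat.{u} R} {k : ℕ} (β : Abelian.Ext Y Z k)
    {n m : ℕ} (h : n + k = m) : extPowersDiagram 𝔟 n Y ⟶ extPowersDiagram 𝔟 m Z where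
  app j := ModuleCat.ofHom (Abelian.Ext.postcompOfLinear β R _ h)
  naturality _ _ f := by
    ext x
    exact Abelian.Ext.comp_assoc _ _ _ (zero_add n) h (by lia)

lemma extPowersDiagramMap_app_map {Y Z : ModuleCat.{u} R} {k : ℕ} (β : Abelian.Ext Y Z k)
    {n m : ℕ} (h : n + k = m) {j j' : ℕᵒᵖᵒᵖ} (f : j ⟶ j') (x : (extPowersDiagram 𝔟 n Y).obj j) :
    (extPowersDiagramMap 𝔟 β h).app j' ((extPowersDiagram 𝔟 n Y).map f x) =
      (extPowersDiagram 𝔟 m Z).map f ((extPowersDiagramMap 𝔟 β h).app j x) :=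
  congr($((extPowersDiagramMap 𝔟 β h).naturality f) x)

variable {𝔟} in
/-- The connecting isomorphism in local cohomology. -/
lemma nonempty_localCohomology_iso_of_eventuallyZero {S : ShortComplex (ModuleCat.{u} R)}
    (hS : S.ShortExact) (n : ℕ) (h₁ : EventuallyZero (extPowersDiagram 𝔟 n S.X₂))
    (h₂ : EventuallyZero (extPowersDiagram 𝔟 (n + 1) S.X₂)) :
    Nonempty ((localCohomology 𝔟 n).obj S.X₃ ≅ (localCohomology 𝔟 (n + 1)).obj S.X₁) := by
  let α := extPowersDiagramMap 𝔟 hS.extClass (n := n) rfl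
  have : IsIso (colimMap α) := by
    refine isIso_colimMap_of_eventually α (fun j x hx ↦ ?_) (fun j y ↦ ?_)
    · obtain ⟨y, rfl⟩ := Abelian.Ext.covariant_sequence_exact₃ _ hS x rfl hx
      obtain ⟨j', f, hf⟩ := h₁ j y
      refine ⟨j', f, ?_⟩
      refine (extPowersDiagramMap_app_map 𝔟 _ (add_zero n) f y).symm.trans ?_
      rw [hf, map_zero]
    · obtain ⟨j', f, hf⟩ := h₂ j ((extPowersDiagramMap 𝔟 (.mk₀ S.f) rfl).app j y)
      obtain ⟨x, hx⟩ := Abelian.Ext.covariant_sequence_exact₁ _ hS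
        ((extPowersDiagram 𝔟 (n + 1) S.X₁).map f y)
        ((extPowersDiagramMap_app_map 𝔟 _ _ f y).trans hf)
        rfl
      exact ⟨j', f, x, hx⟩
  exact ⟨localCohomologyObjIso 𝔟 n S.X₃ ≪≫ asIso (colimMap α) ≪≫
    (localCohomologyObjIso 𝔟 (n + 1) S.X₁).symm⟩

variable {𝔟} in
lemma nonempty_localCohomology_iso_of_eventuallyZero' {S : ShortComplex (ModuleCat.{u} R)}
    (hS : S.ShortExact) (n : ℕ) (h₁ : EventuallyZero (extPowersDiagram 𝔟 n S.X₁))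
    (h₂ : EventuallyZero (extPowersDiagram 𝔟 (n + 1) S.X₁)) :
    Nonempty ((localCohomology 𝔟 n).obj S.X₂ ≅ (localCohomology 𝔟 n).obj S.X₃) := by
  let α := extPowersDiagramMap 𝔟 (.mk₀ S.g) (add_zero n)
  have : IsIso (colimMap α) := by
    refine isIso_colimMap_of_eventually α (fun j x hx ↦ ?_) (fun j y ↦ ?_)
    · obtain ⟨y, rfl⟩ := Abelian.Ext.covariant_sequence_exact₂ _ hS x hx
      obtain ⟨j', f, hf⟩ := h₁ j y
      refine ⟨j', f, ?_⟩
      refine (extPowersDiagramMap_app_map 𝔟 _ (add_zero n) f y).symm.trans ?_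
      rw [hf, map_zero]
    · obtain ⟨j', f, hf⟩ := h₂ j ((extPowersDiagramMap 𝔟 hS.extClass rfl).app j y)
      obtain ⟨x, hx⟩ := Abelian.Ext.covariant_sequence_exact₃ _ hS
        ((extPowersDiagram 𝔟 n S.X₃).map f y) rfl
        ((extPowersDiagramMap_app_map 𝔟 _ _ f y).trans hf)
      exact ⟨j', f, x, hx⟩
  exact ⟨localCohomologyObjIso 𝔟 n S.X₂ ≪≫ asIso (colimMap α) ≪≫
    (localCohomologyObjIso 𝔟 n S.X₃).symm⟩

end

section IdealTorsion

variable {R : Type*} [CommRing R] (𝔟 : Ideal R) (M : Type*) [AddCommGroup M] [Module R M]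

/-- The submodule of elements annihilated by some power of an ideal. -/
def idealTorsion : Submodule R M where
  carrier := {x | ∃ t : ℕ, ∀ a ∈ 𝔟 ^ t, a • x = 0}
  zero_mem' := ⟨0, fun _ _ ↦ smul_zero _⟩
  add_mem' := by
    rintro x y ⟨t, ht⟩ ⟨t', ht'⟩
    refine ⟨max t t', fun a ha ↦ ?_⟩
    rw [smul_add, ht a (Ideal.pow_le_pow_right (le_max_left _ _) ha),
      ht' a (Ideal.pow_le_pow_right (le_max_right _ _) ha), add_zero]
  smul_mem' r := by
    rintro x ⟨t, ht⟩
    exact ⟨t, fun a ha ↦ by rw [smul_comm, ht a ha, smul_zero]⟩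

variable {𝔟 M}

lemma mem_idealTorsion_iff {x : M} :
    x ∈ idealTorsion 𝔟 M ↔ ∃ t : ℕ, ∀ a ∈ 𝔟 ^ t, a • x = 0 := Iff.rfl

lemma exists_pow_smul_eq_zero_of_fg {N : Submodule R M} (hN : N.FG)
    (h : N ≤ idealTorsion 𝔟 M) : ∃ t : ℕ, ∀ a ∈ 𝔟 ^ t, ∀ x ∈ N, a • x = 0 := by
  induction N, hN using Submodule.fg_induction with
  | singleton x =>
    obtain ⟨t, ht⟩ := h (Submodule.mem_span_singleton_self x)
    refine ⟨t, fun a ha y hy ↦ ?_⟩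
    obtain ⟨r, rfl⟩ := Submodule.mem_span_singleton.1 hy
    rw [smul_comm, ht a ha, smul_zero]
  | sup N₁ N₂ _ _ h₁ h₂ =>
    obtain ⟨t₁, ht₁⟩ := h₁ (le_sup_left.trans h)
    obtain ⟨t₂, ht₂⟩ := h₂ (le_sup_right.trans h)
    refine ⟨max t₁ t₂, fun a ha x hx ↦ ?_⟩
    obtain ⟨y, hy, z, hz, rfl⟩ := Submodule.mem_sup.1 hx
    rw [smul_add, ht₁ a (Ideal.pow_le_pow_right (le_max_left _ _) ha) y hy,
      ht₂ a (Ideal.pow_le_pow_right (le_max_right _ _) ha) z hz, add_zero]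

lemma idealTorsion_idealTorsion_eq_top : idealTorsion 𝔟 (idealTorsion 𝔟 M) = ⊤ :=
  eq_top_iff.2 fun ⟨_, t, ht⟩ _ ↦ ⟨t, fun a ha ↦ Subtype.ext (ht a ha)⟩

lemma idealTorsion_eq_top_of_surjective {N : Type*} [AddCommGroup N] [Module R N]
    (f : M →ₗ[R] N) (hf : Function.Surjective f) (h : idealTorsion 𝔟 M = ⊤) :
    idealTorsion 𝔟 N = ⊤ := by
  refine eq_top_iff.2 fun y _ ↦ ?_
  obtain ⟨x, rfl⟩ := hf y
  obtain ⟨t, ht⟩ := h.ge (Submodule.mem_top (x := x))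
  exact ⟨t, fun a ha ↦ by rw [← map_smul, ht a ha, map_zero]⟩

variable (𝔟 M) in
lemma idealTorsion_quotient_idealTorsion [IsNoetherianRing R] :
    idealTorsion 𝔟 (M ⧸ idealTorsion 𝔟 M) = ⊥ := by
  refine eq_bot_iff.2 fun y ⟨t, ht⟩ ↦ ?_
  obtain ⟨x, rfl⟩ := Submodule.mkQ_surjective _ y
  have hx : Submodule.map (LinearMap.toSpanSingleton R M x) (𝔟 ^ t) ≤ idealTorsion 𝔟 M := by
    rintro _ ⟨a, ha, rfl⟩
    rw [← Submodule.Quotient.mk_eq_zero]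
    exact ht a ha
  obtain ⟨s, hs⟩ := exists_pow_smul_eq_zero_of_fg
    ((IsNoetherian.noetherian (𝔟 ^ t)).map _) hx
  refine (Submodule.Quotient.mk_eq_zero _).2 ⟨s + t, fun a ha ↦ ?_⟩
  rw [pow_add] at ha
  refine Submodule.mul_induction_on ha (fun b hb c hc ↦ ?_) (fun b c hb hc ↦ ?_)
  · rw [mul_smul]
    exact hs b hb _ ⟨c, hc, rfl⟩
  · rw [add_smul, hb, hc, add_zero]

end IdealTorsion

section Injective

variable {R : Type u} [CommRing R] [IsNoetherianRing R] (𝔟 : Ideal R)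
  (E : Type u) [AddCommGroup E] [Module R E] [Module.Injective R E]

lemma exists_pow_inf_le_smul (J : Ideal R) (t : ℕ) :
    ∃ m : ℕ, 𝔟 ^ m ⊓ J ≤ 𝔟 ^ t * J := by
  obtain ⟨k, hk⟩ := 𝔟.exists_pow_inf_eq_pow_smul (M := R) J
  refine ⟨k + t, ?_⟩
  have := hk (k + t) (Nat.le_add_right _ _)
  rw [Nat.add_sub_cancel_left] at this
  simp only [smul_eq_mul, Ideal.mul_top] at this
  rw [this]
  exact Ideal.mul_mono_right inf_le_right

instance injective_idealTorsion : Module.Injective R (idealTorsion 𝔟 E) := by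
  refine Module.Baer.injective fun J g ↦ ?_
  obtain ⟨t, ht⟩ := exists_pow_smul_eq_zero_of_fg (𝔟 := 𝔟)
    ((Module.Finite.fg_top (R := R) (M := J)).map g)
    (by rw [idealTorsion_idealTorsion_eq_top]; exact le_top)
  obtain ⟨m, hm⟩ := exists_pow_inf_le_smul 𝔟 J t
  have hg : Submodule.comap J.subtype (𝔟 ^ m) ≤ LinearMap.ker g := by
    intro x hx
    have hx' : (x : R) ∈ Submodule.map J.subtype (𝔟 ^ t • ⊤) := by
      rw [Submodule.map_smul'', Submodule.map_top, Submodule.range_subtype]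
      exact hm ⟨hx, x.2⟩
    obtain ⟨y, hy, hyx⟩ := hx'
    obtain rfl : y = x := Subtype.ext hyx
    refine Submodule.smul_induction_on hy (fun a ha z _ ↦ ?_) (fun z w hz hw ↦ add_mem hz hw)
    rw [LinearMap.mem_ker, map_smul, ht a ha _ (Submodule.mem_map_of_mem trivial)]
  obtain ⟨h, hh⟩ := Module.Injective.out
    (Submodule.mapQ (Submodule.comap J.subtype (𝔟 ^ m)) (𝔟 ^ m) J.subtype le_rfl)
    (LinearMap.ker_eq_bot.1 (by rw [Submodule.ker_mapQ, Submodule.mkQ_map_self]))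
    ((idealTorsion 𝔟 E).subtype ∘ₗ Submodule.liftQ _ g hg)
  refine ⟨LinearMap.codRestrict _ (h ∘ₗ Submodule.mkQ _) fun r ↦ ⟨m, fun a ha ↦ ?_⟩,
    fun x hx ↦ Subtype.ext (hh (Submodule.Quotient.mk ⟨x, hx⟩))⟩
  rw [← map_smul, LinearMap.comp_apply]
  exact (congrArg h ((Submodule.Quotient.mk_eq_zero _).2
    (Ideal.mul_mem_right r _ ha))).trans (map_zero h)

instance injective_quotient_idealTorsion : Module.Injective R (E ⧸ idealTorsion 𝔟 E) := by
  obtain ⟨r, hr⟩ := Module.Injective.out (idealTorsion 𝔟 E).subtype Subtype.val_injective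
    LinearMap.id
  refine ⟨fun X Y _ _ _ _ f hf g ↦ ?_⟩
  let s : (E ⧸ idealTorsion 𝔟 E) →ₗ[R] E := Submodule.liftQ _
    (LinearMap.id - (idealTorsion 𝔟 E).subtype ∘ₗ r) fun x hx ↦ by
      simpa [sub_eq_zero] using (congrArg Subtype.val (hr ⟨x, hx⟩)).symm
  have hs (y) : Submodule.mkQ (idealTorsion 𝔟 E) (s y) = y := by
    obtain ⟨x, rfl⟩ := Submodule.mkQ_surjective _ y
    simp [s]
  obtain ⟨h, hh⟩ := Module.Injective.out f hf (s ∘ₗ g)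
  exact ⟨Submodule.mkQ _ ∘ₗ h, fun x ↦ by rw [LinearMap.comp_apply, hh]; exact hs _⟩

end Injective

section

variable {R : Type u} [CommRing R]

/-- The short complex given by a linear map and the projection to its cokernel. -/
noncomputable abbrev LinearMap.shortComplexRange {M N : Type u} [AddCommGroup M] [Module R M]
    [AddCommGroup N] [Module R N] (f : M →ₗ[R] N) : ShortComplex (ModuleCat.{u} R) :=
  ModuleCat.shortComplexOfCompEqZero f f.range.mkQ f.range_mkQ_comp

lemma LinearMap.shortExact_shortComplexRange {M N : Type u} [AddCommGroup M] [Module R M]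
    [AddCommGroup N] [Module R N] (f : M →ₗ[R] N) (hf : Function.Injective f) :
    f.shortComplexRange.ShortExact :=
  ModuleCat.shortComplex_shortExact _ f.exact_map_mkQ_range hf f.range.mkQ_surjective

/-- Evaluation at `1`, as a map on extensions in degree zero. -/
noncomputable def extZeroEval (I : Ideal R) (M : ModuleCat.{u} R) :
    Abelian.Ext (ModuleCat.of R (R ⧸ I)) M 0 →ₗ[R] M :=
  LinearMap.applyₗ (1 : R ⧸ I) ∘ₗ (ModuleCat.homLinearEquiv (S := R)).toLinearMap ∘ₗ
    (Abelian.Ext.linearEquiv₀ (R := R)).toLinearMap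

lemma extZeroEval_mk₀ (I : Ideal R) {M : ModuleCat.{u} R} (f : ModuleCat.of R (R ⧸ I) ⟶ M) :
    extZeroEval I M (Abelian.Ext.mk₀ f) = f.hom 1 :=
  congr($((Abelian.Ext.linearEquiv₀ (R := R)).apply_symm_apply f).hom 1)

lemma extZeroEval_injective (I : Ideal R) (M : ModuleCat.{u} R) :
    Function.Injective (extZeroEval I M) := by
  intro x y hxy
  obtain ⟨f, rfl⟩ := (Abelian.Ext.mk₀_bijective _ _).2 x
  obtain ⟨g, rfl⟩ := (Abelian.Ext.mk₀_bijective _ _).2 y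
  rw [extZeroEval_mk₀, extZeroEval_mk₀] at hxy
  congr 1
  refine ModuleCat.hom_ext (Submodule.linearMap_qext _ (LinearMap.ext_ring hxy))

lemma smul_extZeroEval_eq_zero {I : Ideal R} {M : ModuleCat.{u} R}
    (x : Abelian.Ext (ModuleCat.of R (R ⧸ I)) M 0) {a : R} (ha : a ∈ I) :
    a • extZeroEval I M x = 0 := by
  obtain ⟨f, rfl⟩ := (Abelian.Ext.mk₀_bijective _ _).2 x
  rw [extZeroEval_mk₀, ← map_smul, show a • (1 : R ⧸ I) = 0 from
    (Submodule.Quotient.mk_eq_zero I).2 (Ideal.mul_mem_right 1 I ha)]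
  exact map_zero _

lemma exists_extZeroEval_eq {I : Ideal R} {M : ModuleCat.{u} R} (y : M)
    (hy : ∀ a ∈ I, a • y = 0) : ∃ x, extZeroEval I M x = y := by
  refine ⟨.mk₀ (ModuleCat.ofHom (Submodule.liftQ I (LinearMap.toSpanSingleton R M y) hy)), ?_⟩
  rw [extZeroEval_mk₀]
  exact one_smul R y

lemma extZeroEval_comp_mk₀ {I : Ideal R} {M N : ModuleCat.{u} R}
    (x : Abelian.Ext (ModuleCat.of R (R ⧸ I)) M 0) (f : M ⟶ N) :
    extZeroEval I N (x.comp (.mk₀ f) (add_zero 0)) = f (extZeroEval I M x) := by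
  obtain ⟨g, rfl⟩ := (Abelian.Ext.mk₀_bijective _ _).2 x
  rw [Abelian.Ext.mk₀_comp_mk₀, extZeroEval_mk₀, extZeroEval_mk₀]
  rfl

lemma extZeroEval_mk₀_comp {I J : Ideal R} {M : ModuleCat.{u} R}
    (g : ModuleCat.of R (R ⧸ I) ⟶ ModuleCat.of R (R ⧸ J)) (hg : g.hom 1 = (1 : R ⧸ J))
    (x : Abelian.Ext (ModuleCat.of R (R ⧸ J)) M 0) :
    extZeroEval I M ((Abelian.Ext.mk₀ g).comp x (zero_add 0)) = extZeroEval J M x := by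
  obtain ⟨f, rfl⟩ := (Abelian.Ext.mk₀_bijective _ _).2 x
  rw [Abelian.Ext.mk₀_comp_mk₀, extZeroEval_mk₀, extZeroEval_mk₀]
  exact congrArg f.hom hg

lemma subsingleton_ext_zero {I 𝔟 : Ideal R} {M : ModuleCat.{u} R} (h : idealTorsion 𝔟 M = ⊥)
    {t : ℕ} (hI : 𝔟 ^ t ≤ I) : Subsingleton (Abelian.Ext (ModuleCat.of R (R ⧸ I)) M 0) := by
  refine subsingleton_of_forall_eq 0 fun x ↦ extZeroEval_injective _ _ ?_
  rw [map_zero]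
  exact h.le ⟨t, fun a ha ↦ smul_extZeroEval_eq_zero x (hI ha)⟩

variable (𝔟 : Ideal R)

lemma extZeroEval_extPowersDiagram_map {M : ModuleCat.{u} R} {j j' : ℕᵒᵖᵒᵖ} (f : j ⟶ j')
    (x : (extPowersDiagram 𝔟 0 M).obj j) :
    extZeroEval (𝔟 ^ j'.unop.unop) M ((extPowersDiagram 𝔟 0 M).map f x) =
      extZeroEval (𝔟 ^ j.unop.unop) M x :=
  extZeroEval_mk₀_comp _ rfl x

lemma eventuallyZero_of_idealTorsion_eq_bot {M : ModuleCat.{u} R} (h : idealTorsion 𝔟 M = ⊥) :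
    EventuallyZero (extPowersDiagram 𝔟 0 M) := fun j _ ↦
  ⟨j, 𝟙 j, (subsingleton_ext_zero h le_rfl).elim _ _⟩

lemma eventuallyZero_of_injective (E : ModuleCat.{u} R) [Injective E] (n : ℕ) :
    EventuallyZero (extPowersDiagram 𝔟 (n + 1) E) := fun j _ ↦
  ⟨j, 𝟙 j, Abelian.Ext.eq_zero_of_injective _⟩

lemma exists_injective_linearMap (M : Type u) [AddCommGroup M] [Module R M] :
    ∃ (E : Type u) (_ : AddCommGroup E) (_ : Module R E) (_ : Module.Injective R E)
      (f : M →ₗ[R] E), Function.Injective f :=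
  let E : ModuleCat.{u} R := Injective.under (ModuleCat.of R M)
  ⟨E, inferInstance, inferInstance,
    Module.injective_module_of_injective_object
      (inj := inferInstanceAs (Injective (Injective.under _))) _ _,
    (Injective.ι (ModuleCat.of R M)).hom,
    (ModuleCat.mono_iff_injective _).1 inferInstance⟩

/-- Local cohomology in degree zero is the torsion submodule. -/
lemma nonempty_localCohomology_zero_iso (M : ModuleCat.{u} R) :
    Nonempty ((localCohomology 𝔟 0).obj M ≅ ModuleCat.of R (idealTorsion 𝔟 M)) := by
  let c : Cocone (extPowersDiagram 𝔟 0 M) :=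
    { pt := ModuleCat.of R (idealTorsion 𝔟 M)
      ι :=
        { app j := ModuleCat.ofHom ((extZeroEval (𝔟 ^ j.unop.unop) M).codRestrict _
            fun x ↦ ⟨j.unop.unop, fun a ha ↦ smul_extZeroEval_eq_zero x ha⟩)
          naturality _ _ f := by
            ext x
            exact Subtype.ext (extZeroEval_extPowersDiagram_map 𝔟 f x) } }
  have hc (j) (x : (extPowersDiagram 𝔟 0 M).obj j) :
      colimit.desc _ c (colimit.ι (extPowersDiagram 𝔟 0 M) j x) = c.ι.app j x :=
    congr($(colimit.ι_desc c j) x)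
  have : IsIso (colimit.desc _ c) := by
    rw [ConcreteCategory.isIso_iff_bijective]
    refine ⟨(injective_iff_map_eq_zero (colimit.desc _ c).hom).2 fun x hx ↦ ?_, fun y ↦ ?_⟩
    · obtain ⟨j, x, rfl⟩ := Concrete.colimit_exists_rep (extPowersDiagram 𝔟 0 M) x
      obtain rfl : x = 0 := extZeroEval_injective _ _
        ((congrArg Subtype.val ((hc j x).symm.trans hx)).trans (map_zero _).symm)
      exact map_zero _
    · obtain ⟨t, ht⟩ := y.2
      obtain ⟨x, hx⟩ := exists_extZeroEval_eq _ ht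
      exact ⟨colimit.ι (extPowersDiagram 𝔟 0 M) (.op (.op t)) x,
        (hc _ _).trans (Subtype.ext hx)⟩
  exact ⟨localCohomologyObjIso 𝔟 0 M ≪≫ asIso (colimit.desc _ c)⟩

variable [IsNoetherianRing R]

lemma eventuallyZero_of_idealTorsion_eq_top (n : ℕ) (T : ModuleCat.{u} R)
    (hT : idealTorsion 𝔟 T = ⊤) : EventuallyZero (extPowersDiagram 𝔟 (n + 1) T) := by
  induction n using Nat.strong_induction_on generalizing T with | h n ih
  obtain ⟨E, _, _, _, ι, hι⟩ := exists_injective_linearMap (R := R) T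
  let f : T →ₗ[R] idealTorsion 𝔟 E := ι.codRestrict _ fun x ↦ by
    obtain ⟨t, ht⟩ := hT.ge (Submodule.mem_top (x := x))
    exact ⟨t, fun a ha ↦ by rw [← map_smul, ht a ha, map_zero]⟩
  have hS := f.shortExact_shortComplexRange fun x y h ↦ hι (congrArg Subtype.val h)
  have : Injective (ModuleCat.of R (idealTorsion 𝔟 E)) :=
    Module.injective_object_of_injective_module _ _
  have hT' : idealTorsion 𝔟 (idealTorsion 𝔟 E ⧸ f.range) = ⊤ :=
    idealTorsion_eq_top_of_surjective f.range.mkQ f.range.mkQ_surjective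
      idealTorsion_idealTorsion_eq_top
  intro j x
  obtain ⟨y, rfl⟩ := Abelian.Ext.covariant_sequence_exact₁ _ hS x
    (Abelian.Ext.eq_zero_of_injective _) rfl
  suffices ∃ (j' : ℕᵒᵖᵒᵖ) (g : j ⟶ j'), (extPowersDiagramMap 𝔟 hS.extClass rfl).app j'
      ((extPowersDiagram 𝔟 n _).map g y) = 0 by
    obtain ⟨j', g, h⟩ := this
    exact ⟨j', g, (extPowersDiagramMap_app_map 𝔟 _ _ g y).symm.trans h⟩
  obtain _ | n := n
  · obtain ⟨z, hz⟩ := f.range.mkQ_surjective (extZeroEval _ _ y)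
    obtain ⟨s, hs⟩ := z.2
    let j' : ℕᵒᵖᵒᵖ := .op (.op (max j.unop.unop s))
    let g : j ⟶ j' := (homOfLE (le_max_left _ _)).op.op
    obtain ⟨w, hw⟩ := exists_extZeroEval_eq (I := 𝔟 ^ j'.unop.unop)
      (M := ModuleCat.of R (idealTorsion 𝔟 E)) z
      (fun a ha ↦ Subtype.ext (hs a (Ideal.pow_le_pow_right (le_max_right _ _) ha)))
    have : (extPowersDiagram 𝔟 0 _).map g y =
        (extPowersDiagramMap 𝔟 (.mk₀ f.shortComplexRange.g) (add_zero 0)).app j' w := by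
      refine extZeroEval_injective _ _ ?_
      refine (extZeroEval_extPowersDiagram_map 𝔟 g y).trans ?_
      refine .trans ?_ (extZeroEval_comp_mk₀ w _).symm
      rw [hw]
      exact hz.symm
    refine ⟨j', g, ?_⟩
    rw [this]
    refine (Abelian.Ext.comp_assoc_of_second_deg_zero _ _ _ rfl).trans ?_
    rw [hS.comp_extClass]
    exact Abelian.Ext.comp_zero ..
  · obtain ⟨j', g, h⟩ := ih n n.lt_succ_self _ hT' j y
    exact ⟨j', g, by rw [h, map_zero]⟩

end

section

lemma Submodule.shortExact_shortComplexMkQ {R : Type u} [CommRing R] {M : Type u} [AddCommGroup M]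
    [Module R M] (p : Submodule R M) : (ModuleCat.shortComplexOfCompEqZero p.subtype p.mkQ
      (by ext; simp)).ShortExact :=
  ModuleCat.shortComplex_shortExact _ (LinearMap.exact_subtype_mkQ p) p.injective_subtype
    p.mkQ_surjective

namespace SerreClass

variable {R : Type u} [CommRing R] {S : SerreClass R} {L M N : Type u} [AddCommGroup L]
  [Module R L] [AddCommGroup M] [Module R M] [AddCommGroup N] [Module R N]

lemma mem_of_injective (f : L →ₗ[R] M) (hf : Function.Injective f) (hM : S.mem M) : S.mem L :=
  ((S.mem_iff_of_ses f f.range.mkQ hf f.range.mkQ_surjective f.range.ker_mkQ.symm).1 hM).1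

lemma mem_of_surjective (g : M →ₗ[R] N) (hg : Function.Surjective g) (hM : S.mem M) : S.mem N :=
  ((S.mem_iff_of_ses g.ker.subtype g g.ker.injective_subtype hg g.ker.range_subtype).1 hM).2

lemma mem_of_subsingleton [Subsingleton N] (hM : S.mem M) : S.mem N :=
  mem_of_surjective (0 : M →ₗ[R] N) (Function.surjective_to_subsingleton _) hM

lemma mem_of_exact {f : L →ₗ[R] M} {g : M →ₗ[R] N} (h : Function.Exact f g) (hL : S.mem L)
    (hN : S.mem N) : S.mem M :=
  (S.mem_iff_of_ses f.range.subtype g.rangeRestrict f.range.injective_subtype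
    g.surjective_rangeRestrict (by
      rw [Submodule.range_subtype, LinearMap.ker_rangeRestrict, h.linearMap_ker_eq])).2
    ⟨mem_of_surjective f.rangeRestrict f.surjective_rangeRestrict hL,
      mem_of_injective g.range.subtype g.range.injective_subtype hN⟩

variable {𝔞 : Ideal R} {n : ℕ}

lemma mem_extIdeal_iff {M : ModuleCat.{u} R} :
    S.mem (extIdeal 𝔞 n M) ↔ S.mem (Abelian.Ext (ModuleCat.of R (R ⧸ 𝔞)) M n) :=
  let e := ((projectiveResolution (ModuleCat.of R (R ⧸ 𝔞))).extIso M n).toLinearEquiv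
  ⟨mem_of_injective e.symm.toLinearMap e.symm.injective,
    mem_of_injective e.toLinearMap e.injective⟩

lemma mem_extIdeal_of_iso {M N : ModuleCat.{u} R} (e : M ≅ N) (h : S.mem (extIdeal 𝔞 n M)) :
    S.mem (extIdeal 𝔞 n N) :=
  let e' := (((Ext R (ModuleCat.{u} R) n).obj _).mapIso e).toLinearEquiv
  mem_of_surjective e'.toLinearMap e'.surjective h

lemma mem_ext_X₂ {X : ModuleCat.{u} R} {K : ShortComplex (ModuleCat.{u} R)} (hK : K.ShortExact)
    (h₁ : S.mem (Abelian.Ext X K.X₁ n)) (h₃ : S.mem (Abelian.Ext X K.X₃ n)) :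
    S.mem (Abelian.Ext X K.X₂ n) := by
  refine mem_of_exact (f := (Abelian.Ext.mk₀ K.f).postcompOfLinear R X (add_zero n))
    (g := (Abelian.Ext.mk₀ K.g).postcompOfLinear R X (add_zero n))
    (fun x ↦ ⟨fun hx ↦ ?_, ?_⟩) h₁ h₃
  · exact Abelian.Ext.covariant_sequence_exact₂ _ hK x hx
  · rintro ⟨y, rfl⟩
    refine (Abelian.Ext.comp_assoc_of_third_deg_zero _ _ _ (add_zero n)).trans ?_
    rw [Abelian.Ext.mk₀_comp_mk₀, K.zero, Abelian.Ext.mk₀_zero]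
    exact Abelian.Ext.comp_zero ..

lemma mem_ext_X₁_of_injective {X : ModuleCat.{u} R} {K : ShortComplex (ModuleCat.{u} R)}
    (hK : K.ShortExact) [Injective K.X₂] (h : S.mem (Abelian.Ext X K.X₃ n)) :
    S.mem (Abelian.Ext X K.X₁ (n + 1)) :=
  mem_of_surjective (hK.extClass.postcompOfLinear R X rfl) (fun x ↦
    Abelian.Ext.covariant_sequence_exact₁ _ hK x (Abelian.Ext.eq_zero_of_injective _) rfl) h

end SerreClass

variable {R : Type u} [CommRing R] [IsNoetherianRing R] (𝔟 : Ideal R)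

/-- Modulo its torsion, a module has a first cosyzygy computing its local cohomology
with a shift. -/
lemma exists_shortExact_localCohomology_iso (M : ModuleCat.{u} R) :
    ∃ K : ShortComplex (ModuleCat.{u} R), K.ShortExact ∧ Injective K.X₂ ∧
      K.X₁ = ModuleCat.of R (M ⧸ idealTorsion 𝔟 M) ∧
      ∀ i, Nonempty ((localCohomology 𝔟 i).obj K.X₃ ≅ (localCohomology 𝔟 (i + 1)).obj M) := by
  obtain ⟨E, _, _, _, ι, hι⟩ := exists_injective_linearMap (R := R) M
  have hι' : idealTorsion 𝔟 M = (idealTorsion 𝔟 E).comap ι := by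
    ext x
    simp only [Submodule.mem_comap, mem_idealTorsion_iff, ← map_smul, map_eq_zero_iff ι hι]
  let f : (M ⧸ idealTorsion 𝔟 M) →ₗ[R] (E ⧸ idealTorsion 𝔟 E) := Submodule.mapQ _ _ ι hι'.le
  have hf : Function.Injective f := by
    rw [← LinearMap.ker_eq_bot, Submodule.ker_mapQ, ← hι', ← Submodule.mkQ_map_self]
  have hK := f.shortExact_shortComplexRange hf
  have hE : Injective (ModuleCat.of R (E ⧸ idealTorsion 𝔟 E)) :=
    Module.injective_object_of_injective_module _ _
  refine ⟨_, hK, hE, rfl, fun i ↦ ?_⟩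
  have h₀ : EventuallyZero (extPowersDiagram 𝔟 i (ModuleCat.of R (E ⧸ idealTorsion 𝔟 E))) := by
    obtain _ | i := i
    · exact eventuallyZero_of_idealTorsion_eq_bot 𝔟 (idealTorsion_quotient_idealTorsion 𝔟 E)
    · exact eventuallyZero_of_injective 𝔟 _ i
  obtain ⟨e⟩ := nonempty_localCohomology_iso_of_eventuallyZero hK i h₀
    (eventuallyZero_of_injective 𝔟 _ i)
  have hT : idealTorsion 𝔟 (ModuleCat.of R (idealTorsion 𝔟 M)) = ⊤ :=
    idealTorsion_idealTorsion_eq_top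
  obtain ⟨e'⟩ := nonempty_localCohomology_iso_of_eventuallyZero'
    (idealTorsion 𝔟 M).shortExact_shortComplexMkQ (i + 1)
    (eventuallyZero_of_idealTorsion_eq_top 𝔟 i _ hT)
    (eventuallyZero_of_idealTorsion_eq_top 𝔟 (i + 1) _ hT)
  exact ⟨e ≪≫ e'.symm⟩

end

/-- Yang–Shen, Lemma 1.8 (module case): if `Ext^j_R(R/𝔞, H^i_𝔟(M)) ∈ S` for all `i + j ≤ s`,
then `Ext^n_R(R/𝔞, M) ∈ S` for all `n ≤ s`. -/
theorem serreClass_mem_ext_of_ext_localCohomology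
    {R : Type u} [CommRing R] [IsNoetherianRing R] (S : SerreClass R)
    (𝔞 𝔟 : Ideal R) (h𝔟𝔞 : 𝔟 ≤ 𝔞) (M : ModuleCat.{u} R) (s : ℕ)
    (h : ∀ i j : ℕ, i + j ≤ s → S.mem (extIdeal 𝔞 j ((localCohomology 𝔟 i).obj M))) :
    ∀ n : ℕ, n ≤ s → S.mem (extIdeal 𝔞 n M) := by
  intro n
  induction n generalizing M s with
  | zero =>
    intro _
    obtain ⟨e⟩ := nonempty_localCohomology_zero_iso 𝔟 M
    have hT := SerreClass.mem_extIdeal_iff.1 (SerreClass.mem_extIdeal_of_iso e (h 0 0 s.zero_le))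
    have : Subsingleton (Abelian.Ext (ModuleCat.of R (R ⧸ 𝔞))
        (ModuleCat.of R (M ⧸ idealTorsion 𝔟 M)) 0) :=
      subsingleton_ext_zero (idealTorsion_quotient_idealTorsion ..) (t := 1) (by rwa [pow_one])
    exact SerreClass.mem_extIdeal_iff.2 (SerreClass.mem_ext_X₂
      (idealTorsion 𝔟 M).shortExact_shortComplexMkQ hT (SerreClass.mem_of_subsingleton hT))
  | succ n ih =>
    intro hn
    obtain ⟨e⟩ := nonempty_localCohomology_zero_iso 𝔟 M
    have hT := SerreClass.mem_extIdeal_iff.1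
      (SerreClass.mem_extIdeal_of_iso e (h 0 (n + 1) (by lia)))
    obtain ⟨K, hK, _, hK₁, eK⟩ := exists_shortExact_localCohomology_iso 𝔟 M
    have hK₃ := ih K.X₃ n (fun i j hij ↦ SerreClass.mem_extIdeal_of_iso (eK i).some.symm
      (h (i + 1) j (by lia))) le_rfl
    have hL := SerreClass.mem_ext_X₁_of_injective hK (SerreClass.mem_extIdeal_iff.1 hK₃)
    rw [hK₁] at hL
    exact SerreClass.mem_extIdeal_iff.2 (SerreClass.mem_ext_X₂
      (idealTorsion 𝔟 M).shortExact_shortComplexMkQ hT hL)
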